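/- Consider the mechanism ScaledGreedy with parameter γ > 0, and let r denote the scalars when ScaledGreedy terminates. Then the sum, over all machines i such that max_j r(i,j) > 1, of max_j r(i,j), is at most n/γ. -/

import Mathlib

open scoped Classical
noncomputable section
variable {n m : ℕ}

/-- The makespan of allocation `a` under instance `p`. -/
def MS [NeZero n] (p : Fin n → Fin m → ℝ) (a : Fin m → Fin n) : ℝ :=
  Finset.univ.sup' Finset.univ_nonempty fun i => ∑ j, if a j = i then p i j else 0

/-- The optimal makespan of instance `p`. -/
def OPT [NeZero n] (p : Fin n → Fin m → ℝ) : ℝ :=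
  Finset.univ.inf' Finset.univ_nonempty fun a : Fin m → Fin n => MS p a

lemma exists_argmin [NeZero n] (v : Fin n → ℝ) :
    (Finset.univ.filter fun i => ∀ i', v i ≤ v i').Nonempty := by
  obtain ⟨i, -, hi⟩ := Finset.exists_min_image Finset.univ v Finset.univ_nonempty
  exact ⟨i, by
    simp only [Finset.mem_filter, Finset.mem_univ, true_and]
    exact fun i' => hi i' (Finset.mem_univ i')⟩

/-- The state of the iterative loop of `ScaledGreedy`: the sets `J_i` and the scalars `r(i,j)`. -/
structure SGState (n m : ℕ) where
  J : Fin n → Finset (Fin m)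
  r : Fin n → Fin m → ℝ

/-- The set `∪_i J_i` of jobs already put aside by the loop. -/
def sgAssigned (s : SGState n m) : Finset (Fin m) :=
  Finset.univ.filter fun j => ∃ i, j ∈ s.J i

/-- The set `I` of machines whose set `J_i` is not yet full. -/
def sgI [NeZero n] (phat : Fin n → Fin m → ℝ) (xhat : Fin m → Fin n) (γ : ℝ)
    (s : SGState n m) : Finset (Fin n) :=
  Finset.univ.filter fun i => ∑ j ∈ s.J i, phat i j < γ * MS phat xhat

/-- The set `T` of candidate pairs `(i,j)`. -/
def sgT [NeZero n] (phat : Fin n → Fin m → ℝ) (xhat : Fin m → Fin n) (γ : ℝ)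
    (s : SGState n m) : Finset (Fin n × Fin m) :=
  Finset.univ.filter fun q =>
    q.2 ∉ sgAssigned s ∧ q.1 ∈ sgI phat xhat γ s ∧
    phat q.1 q.2 < phat (xhat q.2) q.2 ∧
    ∀ i' ∈ sgI phat xhat γ s, phat i' q.2 < phat (xhat q.2) q.2 → phat q.1 q.2 ≤ phat i' q.2

/-- The initial state of `ScaledGreedy`: `J_i = ∅` and `r(i,j) = max(p̂(î_j,j)/p̂(i,j), 1)`. -/
def sgInit (phat : Fin n → Fin m → ℝ) (xhat : Fin m → Fin n) : SGState n m :=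
  ⟨fun _ => ∅, fun i j => max (phat (xhat j) j / phat i j) 1⟩

/-- One iteration of the while-loop of `ScaledGreedy`: a pair `(i*,j*) ∈ T` maximizing
`p̂(î_j,j)/p̂(i,j)` is selected, `j*` is added to `J_{i*}`, and `r(i,j*)` is set to `1` for
every machine `i` with `p̂(i*,j*) ≤ p̂(i,j*)`. -/
def SGStep [NeZero n] (phat : Fin n → Fin m → ℝ) (xhat : Fin m → Fin n) (γ : ℝ)
    (s s' : SGState n m) : Prop :=
  ∃ q ∈ sgT phat xhat γ s,
    (∀ q' ∈ sgT phat xhat γ s,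
      phat (xhat q'.2) q'.2 / phat q'.1 q'.2 ≤ phat (xhat q.2) q.2 / phat q.1 q.2) ∧
    s'.J = (fun i => if i = q.1 then insert q.2 (s.J i) else s.J i) ∧
    s'.r = fun i j => if j = q.2 ∧ phat q.1 q.2 ≤ phat i q.2 then 1 else s.r i j

/-- `s` is the state of `ScaledGreedy` at termination: it is reachable from the initial state
by iterations of the loop, and `T = ∅` so the loop has terminated. -/
def SGFinal [NeZero n] (phat : Fin n → Fin m → ℝ) (xhat : Fin m → Fin n) (γ : ℝ)
    (s : SGState n m) : Prop :=
  Relation.ReflTransGen (SGStep phat xhat γ) (sgInit phat xhat) s ∧ sgT phat xhat γ s = ∅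

/-- The allocation computed by `ScaledGreedy` from the terminal state `s`: each job `j` goes to
a machine minimizing `r(i,j)·p(i,j)`, with ties broken in favor of `î_j` first, then the machine
`i'` with `j ∈ J_{i'}` (if any), then the smallest-index machine. -/
def sgAssign [NeZero n] (s : SGState n m) (xhat : Fin m → Fin n)
    (p : Fin n → Fin m → ℝ) (j : Fin m) : Fin n :=
  let v : Fin n → ℝ := fun i => s.r i j * p i j
  if ∀ i, v (xhat j) ≤ v i then xhat j
  else if h : ∃ i', j ∈ s.J i' ∧ ∀ i, v i' ≤ v i then Classical.choose h
  else (Finset.univ.filter fun i => ∀ i', v i ≤ v i').min' (exists_argmin v)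

/-- `max_j r(i,j)`, the largest scalar of machine `i`. -/
def maxScalar [NeZero m] (r : Fin n → Fin m → ℝ) (i : Fin n) : ℝ :=
  Finset.univ.sup' Finset.univ_nonempty fun j => r i j

/-!
Consider a machine `i` with a scalar `r(i,j) > 1` at termination. Such an `r(i,j)` still has its
initial value `p̂(î_j,j)/p̂(i,j)`, and as long as `i` is not full, `j` has not been put aside. So
`i` must be full, for otherwise `T` would contain a pair with job `j`. Moreover, at every iteration
that put a job `j'` into `J_i`, some pair with job `j` was in `T`, with ratio at least `r(i,j)`, so
greediness gives `p̂(î_{j'},j')/p̂(i,j') ≥ r(i,j)`. Summing over `j' ∈ J_i`,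
`r(i,j) · γ · MS(p̂,x̂) ≤ r(i,j) · ∑_{j' ∈ J_i} p̂(i,j') ≤ ∑_{j' ∈ J_i} p̂(î_{j'},j')`.
The sets `J_i` are disjoint, so the right-hand sides, for all such machines `i`, sum to at most the
total load of `x̂`, which is at most `n · MS(p̂,x̂)`.
-/

section General

lemma sum_sum_le_sum_univ_of_pairwiseDisjoint {ι α M : Type*} [Fintype α] [AddCommMonoid M]
    [PartialOrder M] [IsOrderedAddMonoid M] {S : Finset ι} {t : ι → Finset α} {f : α → M}
    (ht : (S : Set ι).PairwiseDisjoint t) (hf : ∀ a, 0 ≤ f a) :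
    ∑ i ∈ S, ∑ a ∈ t i, f a ≤ ∑ a, f a := by
  rw [← Finset.sum_biUnion ht]
  exact Finset.sum_le_sum_of_subset_of_nonneg (Finset.subset_univ _) fun a _ _ => hf a

lemma exists_eq_maxScalar [NeZero m] (r : Fin n → Fin m → ℝ) (i : Fin n) :
    ∃ j, maxScalar r i = r i j := by
  obtain ⟨j, -, hj⟩ := Finset.exists_mem_eq_sup' Finset.univ_nonempty (r i)
  exact ⟨j, hj⟩

lemma load_le_MS [NeZero n] (p : Fin n → Fin m → ℝ) (a : Fin m → Fin n) (i : Fin n) :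
    (∑ j, if a j = i then p i j else 0) ≤ MS p a :=
  Finset.le_sup' (fun i => ∑ j, if a j = i then p i j else 0) (Finset.mem_univ i)

lemma total_load_le_mul_MS [NeZero n] (p : Fin n → Fin m → ℝ) (a : Fin m → Fin n) :
    ∑ j, p (a j) j ≤ n * MS p a :=
  calc ∑ j, p (a j) j = ∑ j, ∑ i, (if a j = i then p i j else 0) := by simp
    _ = ∑ i, ∑ j, (if a j = i then p i j else 0) := Finset.sum_comm
    _ ≤ ∑ _i : Fin n, MS p a := Finset.sum_le_sum fun i _ => load_le_MS p a i
    _ = n * MS p a := by simp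

lemma MS_pos [NeZero n] [NeZero m] {p : Fin n → Fin m → ℝ} {a : Fin m → Fin n}
    (hp : ∀ j, 0 < p (a j) j) : 0 < MS p a := by
  have htotal : 0 < n * MS p a :=
    (Finset.sum_pos (fun j _ => hp j) Finset.univ_nonempty).trans_le (total_load_le_mul_MS p a)
  exact pos_of_mul_pos_right htotal n.cast_nonneg

end General

section State

variable {phat : Fin n → Fin m → ℝ} {xhat : Fin m → Fin n} {γ : ℝ} {s : SGState n m}
  {q : Fin n × Fin m} {i : Fin n} {j : Fin m}

lemma mem_sgAssigned : j ∈ sgAssigned s ↔ ∃ i, j ∈ s.J i := by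
  simp only [sgAssigned, Finset.mem_filter_univ]

lemma mem_sgI [NeZero n] :
    i ∈ sgI phat xhat γ s ↔ ∑ j ∈ s.J i, phat i j < γ * MS phat xhat := by
  simp only [sgI, Finset.mem_filter_univ]

lemma mem_sgT [NeZero n] :
    q ∈ sgT phat xhat γ s ↔
      q.2 ∉ sgAssigned s ∧ q.1 ∈ sgI phat xhat γ s ∧ phat q.1 q.2 < phat (xhat q.2) q.2 ∧
      ∀ i' ∈ sgI phat xhat γ s,
        phat i' q.2 < phat (xhat q.2) q.2 → phat q.1 q.2 ≤ phat i' q.2 := by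
  simp only [sgT, Finset.mem_filter_univ]

lemma exists_mem_sgT_le [NeZero n] (hi : i ∈ sgI phat xhat γ s) (hj : j ∉ sgAssigned s)
    (hlt : phat i j < phat (xhat j) j) :
    ∃ k, (k, j) ∈ sgT phat xhat γ s ∧ phat k j ≤ phat i j := by
  obtain ⟨k, hk, hmin⟩ := Finset.exists_min_image
    {i' ∈ sgI phat xhat γ s | phat i' j < phat (xhat j) j} (phat · j)
    ⟨i, Finset.mem_filter.mpr ⟨hi, hlt⟩⟩
  obtain ⟨hkI, hklt⟩ := Finset.mem_filter.mp hk
  exact ⟨k, mem_sgT.mpr ⟨hj, hkI, hklt, fun i' hi' hlt' =>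
    hmin i' (Finset.mem_filter.mpr ⟨hi', hlt'⟩)⟩, hmin i (Finset.mem_filter.mpr ⟨hi, hlt⟩)⟩

/-- The state after an iteration of the `ScaledGreedy` loop that selects the pair `q = (i*,j*)`. -/
def sgUpdate (phat : Fin n → Fin m → ℝ) (q : Fin n × Fin m) (s : SGState n m) : SGState n m where
  J i := if i = q.1 then insert q.2 (s.J i) else s.J i
  r i j := if j = q.2 ∧ phat q.1 q.2 ≤ phat i q.2 then 1 else s.r i j

lemma mem_sgUpdate_J : j ∈ (sgUpdate phat q s).J i ↔ j ∈ s.J i ∨ i = q.1 ∧ j = q.2 := by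
  simp only [sgUpdate]
  split_ifs with hi <;> simp [hi, or_comm]

lemma mem_sgAssigned_sgUpdate :
    j ∈ sgAssigned (sgUpdate phat q s) ↔ j ∈ sgAssigned s ∨ j = q.2 := by
  simp [mem_sgAssigned, mem_sgUpdate_J, exists_or]

lemma sgI_sgUpdate_subset [NeZero n] (hphat : ∀ i j, 0 ≤ phat i j) :
    sgI phat xhat γ (sgUpdate phat q s) ⊆ sgI phat xhat γ s := by
  intro i hi
  refine mem_sgI.mpr (lt_of_le_of_lt ?_ (mem_sgI.mp hi))
  exact Finset.sum_le_sum_of_subset_of_nonneg (fun j hj => mem_sgUpdate_J.mpr (Or.inl hj))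
    fun j _ _ => hphat i j

lemma one_lt_sgUpdate_r :
    1 < (sgUpdate phat q s).r i j ↔
      1 < s.r i j ∧ (j = q.2 → phat i q.2 < phat q.1 q.2) := by
  simp only [sgUpdate]
  split_ifs with hreset
  · simp [hreset]
  · simp only [not_and, not_le] at hreset
    exact (and_iff_left hreset).symm

lemma sgUpdate_r_eq_of_one_lt (hr : 1 < (sgUpdate phat q s).r i j) :
    (sgUpdate phat q s).r i j = s.r i j := by
  simp only [sgUpdate] at hr ⊢
  split_ifs at hr ⊢
  · exact absurd hr (lt_irrefl 1)
  · rfl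

end State

/-- The states occurring in a run of the `ScaledGreedy` loop, with any resolution of the ties in
the choice of the pair that maximizes `p̂(î_j,j)/p̂(i,j)` over `T`. -/
inductive SGReachable [NeZero n] (phat : Fin n → Fin m → ℝ) (xhat : Fin m → Fin n) (γ : ℝ) :
    SGState n m → Prop
  | start : SGReachable phat xhat γ (sgInit phat xhat)
  | update {s : SGState n m} {q : Fin n × Fin m} (hs : SGReachable phat xhat γ s)
      (hq : q ∈ sgT phat xhat γ s)
      (hmax : ∀ q' ∈ sgT phat xhat γ s,
        phat (xhat q'.2) q'.2 / phat q'.1 q'.2 ≤ phat (xhat q.2) q.2 / phat q.1 q.2) :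
      SGReachable phat xhat γ (sgUpdate phat q s)

section Run

variable [NeZero n] {phat : Fin n → Fin m → ℝ} {xhat : Fin m → Fin n} {γ : ℝ}
  {s : SGState n m} {i : Fin n} {j j' : Fin m}

lemma SGReachable.step {s' : SGState n m} (hs : SGReachable phat xhat γ s)
    (hstep : SGStep phat xhat γ s s') : SGReachable phat xhat γ s' := by
  obtain ⟨q, hq, hmax, hJ, hr⟩ := hstep
  have hs' : s' = sgUpdate phat q s := by
    cases s'
    exact congrArg₂ SGState.mk hJ hr
  exact hs' ▸ hs.update hq hmax

lemma SGFinal.reachable (hs : SGFinal phat xhat γ s) : SGReachable phat xhat γ s := by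
  obtain ⟨hrun, -⟩ := hs
  induction hrun with
  | refl => exact .start
  | tail _ hstep ih => exact ih.step hstep

namespace SGReachable

lemma eq_of_mem_J {i' : Fin n} (hs : SGReachable phat xhat γ s) (hi : j ∈ s.J i)
    (hi' : j ∈ s.J i') : i = i' := by
  induction hs with
  | start => exact absurd hi (Finset.notMem_empty j)
  | @update s q _ hq _ ih =>
    have hnew : ∀ k, q.2 ∉ s.J k := fun k hk => (mem_sgT.mp hq).1 (mem_sgAssigned.mpr ⟨k, hk⟩)
    rcases mem_sgUpdate_J.mp hi with hi | ⟨rfl, rfl⟩ <;>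
      rcases mem_sgUpdate_J.mp hi' with hi' | ⟨rfl, hj⟩
    · exact ih hi hi'
    · exact absurd (hj ▸ hi) (hnew i)
    · exact absurd hi' (hnew i')
    · rfl

lemma pairwiseDisjoint_J (hs : SGReachable phat xhat γ s) (S : Set (Fin n)) :
    S.PairwiseDisjoint s.J := fun _ _ _ _ hne =>
  Finset.disjoint_left.mpr fun _ hi hi' => hne (hs.eq_of_mem_J hi hi')

lemma r_eq_div (hs : SGReachable phat xhat γ s) (hr : 1 < s.r i j) :
    s.r i j = phat (xhat j) j / phat i j := by
  induction hs with
  | start => exact max_eq_left_of_lt ((lt_max_iff.mp hr).resolve_right (lt_irrefl 1))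
  | update _ _ _ ih => exact (sgUpdate_r_eq_of_one_lt hr).trans (ih (one_lt_sgUpdate_r.mp hr).1)

lemma lt_of_one_lt_r (hs : SGReachable phat xhat γ s) (hphat : 0 < phat i j)
    (hr : 1 < s.r i j) : phat i j < phat (xhat j) j :=
  (one_lt_div hphat).mp (hs.r_eq_div hr ▸ hr)

-- When `j` is put aside on `i*`, minimality of `p̂(i*,j)` over `I` resets the scalar `r(i,j)` of
-- every `i ∈ I` with `p̂(i,j) < p̂(î_j,j)`.
lemma notMem_sgAssigned (hs : SGReachable phat xhat γ s) (hphat : ∀ i j, 0 < phat i j)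
    (hr : 1 < s.r i j) (hi : i ∈ sgI phat xhat γ s) : j ∉ sgAssigned s := by
  induction hs with
  | start => simp [mem_sgAssigned, sgInit]
  | @update s q hs hq _ ih =>
    obtain ⟨hr, hlt⟩ := one_lt_sgUpdate_r.mp hr
    have hi := sgI_sgUpdate_subset (fun i j => (hphat i j).le) hi
    rw [mem_sgAssigned_sgUpdate, not_or]
    refine ⟨ih hr hi, ?_⟩
    rintro rfl
    obtain ⟨-, -, -, hmin⟩ := mem_sgT.mp hq
    exact (hlt rfl).not_ge (hmin i hi (hs.lt_of_one_lt_r (hphat i _) hr))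

lemma exists_mem_sgT (hs : SGReachable phat xhat γ s) (hphat : ∀ i j, 0 < phat i j)
    (hr : 1 < s.r i j) (hi : i ∈ sgI phat xhat γ s) :
    ∃ k, (k, j) ∈ sgT phat xhat γ s ∧ s.r i j ≤ phat (xhat j) j / phat k j := by
  obtain ⟨k, hk, hle⟩ := exists_mem_sgT_le hi (hs.notMem_sgAssigned hphat hr hi)
    (hs.lt_of_one_lt_r (hphat i j) hr)
  refine ⟨k, hk, ?_⟩
  rw [hs.r_eq_div hr]
  exact div_le_div_of_nonneg_left (hphat _ _).le (hphat _ _) hle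

lemma r_le_div (hs : SGReachable phat xhat γ s) (hphat : ∀ i j, 0 < phat i j)
    (hr : 1 < s.r i j) (hj' : j' ∈ s.J i) : s.r i j ≤ phat (xhat j') j' / phat i j' := by
  induction hs with
  | start => exact absurd hj' (Finset.notMem_empty j')
  | update hs hq hmax ih =>
    rw [sgUpdate_r_eq_of_one_lt hr]
    have hr := (one_lt_sgUpdate_r.mp hr).1
    rcases mem_sgUpdate_J.mp hj' with hj' | ⟨rfl, rfl⟩
    · exact ih hr hj'
    · obtain ⟨k, hk, hle⟩ := hs.exists_mem_sgT hphat hr (mem_sgT.mp hq).2.1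
      exact hle.trans (hmax _ hk)

lemma r_mul_sum_le (hs : SGReachable phat xhat γ s) (hphat : ∀ i j, 0 < phat i j)
    (hr : 1 < s.r i j) :
    s.r i j * ∑ j' ∈ s.J i, phat i j' ≤ ∑ j' ∈ s.J i, phat (xhat j') j' := by
  rw [Finset.mul_sum]
  exact Finset.sum_le_sum fun j' hj' =>
    (le_div_iff₀ (hphat i j')).mp (hs.r_le_div hphat hr hj')

end SGReachable

namespace SGFinal

lemma mul_MS_le_sum (hs : SGFinal phat xhat γ s) (hphat : ∀ i j, 0 < phat i j)
    (hr : 1 < s.r i j) : γ * MS phat xhat ≤ ∑ j' ∈ s.J i, phat i j' := by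
  by_contra! hlt
  obtain ⟨k, hk, -⟩ := hs.reachable.exists_mem_sgT hphat hr (mem_sgI.mpr hlt)
  exact Finset.notMem_empty _ (hs.2 ▸ hk)

lemma maxScalar_mul_le [NeZero m] (hs : SGFinal phat xhat γ s) (hphat : ∀ i j, 0 < phat i j)
    (hi : 1 < maxScalar s.r i) :
    maxScalar s.r i * (γ * MS phat xhat) ≤ ∑ j ∈ s.J i, phat (xhat j) j := by
  obtain ⟨j, hj⟩ := exists_eq_maxScalar s.r i
  rw [hj] at hi ⊢
  calc s.r i j * (γ * MS phat xhat) ≤ s.r i j * ∑ j' ∈ s.J i, phat i j' :=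
        mul_le_mul_of_nonneg_left (hs.mul_MS_le_sum hphat hi) (zero_le_one.trans hi.le)
    _ ≤ ∑ j' ∈ s.J i, phat (xhat j') j' := hs.reachable.r_mul_sum_le hphat hi

end SGFinal

end Run

/-- At termination of `ScaledGreedy`, the sum over all machines `i` with
`max_j r(i,j) > 1` of `max_j r(i,j)` is at most `n/γ`. -/
theorem sg_sum_max_scalar [NeZero n] [NeZero m]
    (phat : Fin n → Fin m → ℝ) (xhat : Fin m → Fin n) (γ : ℝ) (s : SGState n m)
    (hphat : ∀ i j, 0 < phat i j) (hγ : 0 < γ)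
    (hfinal : SGFinal phat xhat γ s) :
    ∑ i ∈ Finset.univ.filter (fun i => 1 < maxScalar s.r i), maxScalar s.r i
      ≤ (n : ℝ) / γ := by
  have hMS : 0 < MS phat xhat := MS_pos fun j => hphat (xhat j) j
  rw [le_div_iff₀ hγ]
  refine le_of_mul_le_mul_right ?_ hMS
  rw [mul_assoc, Finset.sum_mul]
  calc ∑ i with 1 < maxScalar s.r i, maxScalar s.r i * (γ * MS phat xhat)
      ≤ ∑ i with 1 < maxScalar s.r i, ∑ j ∈ s.J i, phat (xhat j) j :=
        Finset.sum_le_sum fun i hi => hfinal.maxScalar_mul_le hphat (Finset.mem_filter.mp hi).2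
    _ ≤ ∑ j, phat (xhat j) j :=
        sum_sum_le_sum_univ_of_pairwiseDisjoint (hfinal.reachable.pairwiseDisjoint_J _)
          fun j => (hphat (xhat j) j).le
    _ ≤ n * MS phat xhat := total_load_le_mul_MS phat xhat
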